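/- arXiv:1010.1607 — 5 statements merged into one kernel-verified Lean document; each statement's English description precedes it below -/
import Mathlib

section
/- Let a, b, c > 0 with abc = 1 and a ≥ 1/√2, b ≥ 1/√2, c ≥ 1/√2. Let A = (s, 0, 0), B = (a, t, c), C = (0, b, u) be points of ℝ³ with s ∈ [0, a], t ∈ [0, b], u ∈ [0, c] (so A, B, C lie on three pairwise skew edges of the brick [0,a] × [0,b] × [0,c]). If the triangle ABC is equilateral, i.e. dist(A,B) = dist(B,C) = dist(C,A), then its side length satisfies dist(A,B) ≤ √2. -/
theorem brick_caseA (x y z : ℝ) (hx : 1/2 ≤ x) (hy : 1/2 ≤ y) (hz : 1/2 ≤ z)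
    (h : x * y * z = 1) (h1 : 2 ≤ x + z) (h2 : 2 ≤ y + z) (hy2 : y < 2) :
    (x + z)^2 ≤ 4 * (z * (2 - y)) := by
  have hxz : x * z ≤ 2 := by nlinarith [mul_pos (by linarith : 0 < x) (by linarith : 0 < z)]
  have hxz2 : x * z * (2 - z) ≤ 1 := by
    nlinarith [mul_pos (by linarith : 0 < x) (by linarith : 0 < z)]
  have key : x * (x + z)^2 ≤ 8 * (x * z) - 4 := by
    rcases le_total x 1 with hx1 | hx1
    · have hd : 0 ≤ x * (x + z - 2) * (6 - x - z) := by
        apply mul_nonneg (mul_nonneg (by linarith) (by linarith))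
        nlinarith
      nlinarith [mul_nonneg (sub_nonneg.2 hx1) (sub_nonneg.2 hx)]
    · obtain ⟨g, rfl⟩ : ∃ g, x = 1 + g := ⟨x - 1, by ring⟩
      obtain ⟨e, rfl⟩ : ∃ e, z = 1 + e := ⟨z - 1, by ring⟩
      have hg : 0 ≤ g := by linarith
      have hge : g ≤ e := by
        by_contra hlt
        rw [not_le] at hlt
        rcases le_total e 0 with he | he
        · have h5 : 0 ≤ (g + e) * (1 - e^2) := mul_nonneg (by linarith) (by nlinarith)
          have h6 : -e ≤ 1/2 := by linarith
          have h7 : 0 ≤ (-e) * (1 + e - e^2) := mul_nonneg (by linarith) (by nlinarith)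
          have h8 : e = 0 := by
            by_contra hne
            have : 0 < (-e) * (1 + e - e^2) :=
              mul_pos (by have := lt_of_le_of_ne he hne; linarith) (by nlinarith)
            nlinarith
          subst h8
          nlinarith
        · have h4 : e < 1/2 := by nlinarith
          have h5 : 0 < (g - e) * (1 - e^2) := mul_pos (by linarith) (by nlinarith)
          have h7 : 0 ≤ e * (1 - e - e^2) := mul_nonneg (by linarith) (by nlinarith)
          nlinarith
      have hs : g + e ≤ 1 := by nlinarith [mul_nonneg hg (hg.trans hge)]
      have k1 : 0 ≤ (1 + g) * ((g + e) * (1 - g - e)) :=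
        mul_nonneg (by linarith) (mul_nonneg (by linarith) (by linarith))
      have k2 : 0 ≤ (1 + g) * (e - g) := mul_nonneg (by linarith) (by linarith)
      have k3 : 0 ≤ g * (1 - g) := mul_nonneg hg (by linarith)
      nlinarith
  have : x * (x+z)^2 ≤ x * (4 * (z * (2 - y))) := by nlinarith
  exact le_of_mul_le_mul_left this (by linarith)

theorem brick_caseB (x y z : ℝ) (hx : 1/2 ≤ x) (hz : 1/2 ≤ z)
    (h : x * y * z = 1) (hy2 : 2 ≤ y) : x + z < 2 ∧ y ≤ 4 * (2 - x - z) := by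
  have hxz0 := mul_pos (by linarith : 0 < x) (by linarith : 0 < z)
  have hxz : x * z ≤ 1/2 := by nlinarith
  have hs : x + z ≤ 3/2 := by nlinarith
  refine ⟨by linarith, ?_⟩
  have h3 : 1 ≤ 4 * (x * z) * (2 - x - z) := by
    nlinarith [mul_nonneg (sub_nonneg.2 hx) (sub_nonneg.2 hz)]
  have : (x * z) * y ≤ (x * z) * (4 * (2 - x - z)) := by nlinarith
  exact le_of_mul_le_mul_left this hxz0

theorem brick_caseC (x y z m : ℝ) (hx : 1/2 ≤ x) (hy : 1/2 ≤ y) (hz : 1/2 ≤ z)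
    (h : x * y * z = 1) (h2 : 2 ≤ y + z) (hm : m^2 = z * (2 - y)) (hm0 : 0 ≤ m) (hm1 : m < 1) :
    (1 - m)^2 ≤ y * (2 - x - z) := by
  have hyz0 := mul_pos (by linarith : 0 < y) (by linarith : 0 < z)
  have hyz : y * z ≤ 2 := by nlinarith
  have hmz : m ≤ z := by
    apply le_of_sq_le_sq _ (by linarith)
    nlinarith
  have H : 0 ≤ (1 - z) * (2 * z - 1) + 2 * m * (z - m) := by
    rcases le_total z 1 with h1 | h1
    · nlinarith [mul_nonneg (sub_nonneg.2 h1) (sub_nonneg.2 hz), mul_nonneg hm0 (sub_nonneg.2 hmz)]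
    · obtain ⟨e, rfl⟩ : ∃ e, z = 1 + e := ⟨z - 1, by ring⟩
      have he : 0 ≤ e := by linarith
      have he2 : 2 * e ≤ m^2 := by nlinarith
      have : 0 ≤ (1 - m) * (2 * m - e * (1 - m)) := by
        apply mul_nonneg (by linarith)
        nlinarith
      nlinarith [mul_nonneg he (sub_nonneg.2 he2)]
  have : z * (1 - m)^2 ≤ z * (y * (2 - x - z)) := by nlinarith
  exact le_of_mul_le_mul_left this (by linarith)

theorem brick_boundary (a b c t u : ℝ) (ha : 0 < a) (hb : 0 < b) (hc : 0 < c)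
    (h : a * b * c = 1) (ha2 : 1/2 ≤ a^2) (hb2 : 1/2 ≤ b^2) (hc2 : 1/2 ≤ c^2)
    (ht0 : 0 ≤ t) (htb : t ≤ b) (hu0 : 0 ≤ u) (huc : u ≤ c)
    (f1 : 2 < a^2 + t^2 + c^2) (f2 : 2 < (b-t)^2 + (c-u)^2 + a^2) (f3 : 2 < u^2 + b^2) : False := by
  have hv : a^2 * b^2 * c^2 = 1 := by rw [← mul_pow, ← mul_pow, h, one_pow]
  have hyz : 2 ≤ b^2 + c^2 := by nlinarith
  rcases le_or_gt 2 (b^2) with hy | hy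
  · obtain ⟨h1, h2⟩ := brick_caseB _ _ _ ha2 hc2 hv hy
    set k := 2 - a^2 - c^2 with hk
    have ht : k < t^2 := by linarith
    have hq : k < (b-t)^2 := by nlinarith
    have : k < t * (b-t) := by
      apply lt_of_pow_lt_pow_left₀ 2 (mul_nonneg ht0 (by linarith))
      have hk0 : 0 < k := by linarith
      rw [mul_pow]; nlinarith
    nlinarith
  · obtain ⟨U, hU0, hU⟩ : ∃ U, 0 ≤ U ∧ U^2 = 2 - b^2 :=
      ⟨√(2 - b^2), Real.sqrt_nonneg _, Real.sq_sqrt (by linarith)⟩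
    have huU : U ≤ u := le_of_sq_le_sq (by linarith) hu0
    have hvv : (c-u)^2 ≤ (c-U)^2 := by
      apply pow_le_pow_left₀ <;> linarith
    have hm : (c*U)^2 = c^2 * (2 - b^2) := by rw [mul_pow, hU]
    have hm0 : 0 ≤ c * U := by positivity
    rcases le_or_gt 2 (a^2 + c^2) with hxz | hxz
    · have hA := brick_caseA _ _ _ ha2 hb2 hc2 hv hxz hyz hy
      rw [← hm] at hA
      have : a^2 + c^2 ≤ 2 * (c*U) := by
        apply le_of_sq_le_sq _ (by linarith)
        linarith
      have : (b-t)^2 ≤ b^2 := by apply pow_le_pow_left₀ <;> linarith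
      nlinarith
    · obtain ⟨T, hT0, hT⟩ : ∃ T, 0 ≤ T ∧ T^2 = 2 - a^2 - c^2 :=
        ⟨√(2 - a^2 - c^2), Real.sqrt_nonneg _, Real.sq_sqrt (by linarith)⟩
      have htT : T ≤ t := le_of_sq_le_sq (by linarith) ht0
      have hqq : (b-t)^2 ≤ (b-T)^2 := by
        apply pow_le_pow_left₀ <;> linarith
      have hbT : 0 ≤ b * T := by positivity
      have hlt : b * T + c * U < 1 := by nlinarith
      have hC := brick_caseC _ _ _ _ ha2 hb2 hc2 hv hyz hm hm0 (by linarith)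
      rw [← hT, ← mul_pow] at hC
      have := le_of_sq_le_sq hC hbT
      linarith

theorem exists_min3 (A B C X Y Z : ℝ) (hA : 0 < A) (hB : 0 < B) (hC : 0 < C)
    (hX : 0 < X) (hY : 0 < Y) (hZ : 0 < Z) :
    ∃ l : ℝ, 0 ≤ l ∧ l * A ≤ X ∧ l * B ≤ Y ∧ l * C ≤ Z ∧ (l * A = X ∨ l * B = Y ∨ l * C = Z) := by
  refine ⟨min (X/A) (min (Y/B) (Z/C)), by positivity, ?_, ?_, ?_, ?_⟩
  · rw [← le_div_iff₀ hA]; simp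
  · rw [← le_div_iff₀ hB]; simp
  · rw [← le_div_iff₀ hC]; simp
  · rw [← eq_div_iff hA.ne', ← eq_div_iff hB.ne', ← eq_div_iff hC.ne']
    rcases min_choice (X/A) (min (Y/B) (Z/C)) with h | h
    · exact Or.inl h
    · rw [h]
      exact Or.inr (min_choice _ _)

theorem brick_bd (a b c s t u : ℝ) (ha : 0 < a) (hb : 0 < b) (hc : 0 < c)
    (h : a * b * c = 1) (ha2 : 1/2 ≤ a^2) (hb2 : 1/2 ≤ b^2) (hc2 : 1/2 ≤ c^2)
    (hs0 : 0 ≤ s) (hsa : s ≤ a) (ht0 : 0 ≤ t) (htb : t ≤ b) (hu0 : 0 ≤ u) (huc : u ≤ c)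
    (f1 : 2 < (a-s)^2 + t^2 + c^2) (f2 : 2 < (b-t)^2 + (c-u)^2 + a^2) (f3 : 2 < s^2 + u^2 + b^2)
    (hbd : s = 0 ∨ s = a ∨ t = 0 ∨ t = b ∨ u = 0 ∨ u = c) : False := by
  rcases hbd with h0 | h0 | h0 | h0 | h0 | h0
  · subst h0
    exact brick_boundary a b c t u ha hb hc h ha2 hb2 hc2 ht0 htb hu0 huc
      (by linarith) (by linarith) (by linarith)
  · subst h0
    exact brick_boundary s c b u t ha hc hb (by linarith) ha2 hc2 hb2 hu0 huc ht0 htb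
      (by linarith) (by linarith) (by linarith)
  · subst h0
    exact brick_boundary b c a (c-u) (a-s) hb hc ha (by linarith) hb2 hc2 ha2 (by linarith)
      (by linarith) (by linarith) (by linarith)
      (by linarith) (by linarith) (by linarith)
  · subst h0
    exact brick_boundary t a c (a-s) (c-u) hb ha hc (by linarith) hb2 ha2 hc2 (by linarith)
      (by linarith) (by linarith) (by linarith)
      (by linarith) (by linarith) (by linarith)
  · subst h0
    exact brick_boundary c b a (b-t) s hc hb ha (by linarith) hc2 hb2 ha2 (by linarith)
      (by linarith) (by linarith) (by linarith)
      (by linarith) (by linarith) (by linarith)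
  · subst h0
    exact brick_boundary u a b s (b-t) hc ha hb (by linarith) hc2 ha2 hb2 (by linarith)
      (by linarith) (by linarith) (by linarith)
      (by linarith) (by linarith) (by linarith)

theorem brick_all (a b c s t u : ℝ) (ha : 0 < a) (hb : 0 < b) (hc : 0 < c)
    (h : a * b * c = 1) (ha2 : 1/2 ≤ a^2) (hb2 : 1/2 ≤ b^2) (hc2 : 1/2 ≤ c^2)
    (hs0 : 0 ≤ s) (hsa : s ≤ a) (ht0 : 0 ≤ t) (htb : t ≤ b) (hu0 : 0 ≤ u) (huc : u ≤ c)
    (f1 : 2 < (a-s)^2 + t^2 + c^2) (f2 : 2 < (b-t)^2 + (c-u)^2 + a^2)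
    (f3 : 2 < s^2 + u^2 + b^2) : False := by
  by_cases hbd : s = 0 ∨ s = a ∨ t = 0 ∨ t = b ∨ u = 0 ∨ u = c
  · exact brick_bd a b c s t u ha hb hc h ha2 hb2 hc2 hs0 hsa ht0 htb hu0 huc f1 f2 f3 hbd
  simp only [not_or] at hbd
  obtain ⟨n1, n2, n3, n4, n5, n6⟩ := hbd
  have s0 : 0 < s := lt_of_le_of_ne hs0 (Ne.symm n1)
  have t0 : 0 < t := lt_of_le_of_ne ht0 (Ne.symm n3)
  have u0 : 0 < u := lt_of_le_of_ne hu0 (Ne.symm n5)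
  have p0 : 0 < a - s := sub_pos.2 (lt_of_le_of_ne hsa n2)
  have q0 : 0 < b - t := sub_pos.2 (lt_of_le_of_ne htb n4)
  have v0 : 0 < c - u := sub_pos.2 (lt_of_le_of_ne huc n6)
  have A0 := mul_pos t0 v0
  have B0 := mul_pos p0 v0
  have C0 := mul_pos p0 q0
  rcases le_total (u * ((a-s)*(b-t))) (s * (t*(c-u))) with hd | hd
  · obtain ⟨l, l0, l1, l2, l3, l4⟩ := exists_min3 _ _ _ _ _ _ A0 B0 C0 p0 q0 u0
    have := mul_le_mul_of_nonneg_left hd l0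
    have g1 : 0 ≤ l * (t*(c-u)) := by positivity
    have g2 : 0 ≤ l * ((a-s)*(c-u)) := by positivity
    have g3 : 0 ≤ l * ((a-s)*(b-t)) := by positivity
    refine brick_bd a b c (s + l * (t*(c-u))) (t + l * ((a-s)*(c-u))) (u - l * ((a-s)*(b-t)))
      ha hb hc h ha2 hb2 hc2 (by linarith) (by linarith) (by linarith) (by linarith) (by linarith)
      (by linarith) ?_ ?_ ?_ ?_
    · linarith [sq_nonneg (l * (t*(c-u))), sq_nonneg (l * ((a-s)*(c-u)))]
    · linarith [sq_nonneg (l * ((a-s)*(c-u))), sq_nonneg (l * ((a-s)*(b-t)))]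
    · linarith [sq_nonneg (l * (t*(c-u))), sq_nonneg (l * ((a-s)*(b-t)))]
    · rcases l4 with e | e | e
      · right; left; linarith
      · right; right; right; left; linarith
      · right; right; right; right; left; linarith
  · obtain ⟨l, l0, l1, l2, l3, l4⟩ := exists_min3 _ _ _ _ _ _ A0 B0 C0 s0 t0 v0
    have := mul_le_mul_of_nonneg_left hd l0
    have g1 : 0 ≤ l * (t*(c-u)) := by positivity
    have g2 : 0 ≤ l * ((a-s)*(c-u)) := by positivity
    have g3 : 0 ≤ l * ((a-s)*(b-t)) := by positivity
    refine brick_bd a b c (s - l * (t*(c-u))) (t - l * ((a-s)*(c-u))) (u + l * ((a-s)*(b-t)))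
      ha hb hc h ha2 hb2 hc2 (by linarith) (by linarith) (by linarith) (by linarith) (by linarith)
      (by linarith) ?_ ?_ ?_ ?_
    · linarith [sq_nonneg (l * (t*(c-u))), sq_nonneg (l * ((a-s)*(c-u)))]
    · linarith [sq_nonneg (l * ((a-s)*(c-u))), sq_nonneg (l * ((a-s)*(b-t)))]
    · linarith [sq_nonneg (l * (t*(c-u))), sq_nonneg (l * ((a-s)*(b-t)))]
    · rcases l4 with e | e | e
      · left; linarith
      · right; right; left; linarith
      · right; right; right; right; right; linarith

theorem half_le_sq_of (a : ℝ) (h : 1 / Real.sqrt 2 ≤ a) : 1/2 ≤ a^2 := by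
  have h1 : (1 / Real.sqrt 2)^2 = 1/2 := by
    rw [div_pow, Real.sq_sqrt (by norm_num)]; norm_num
  rw [← h1]
  exact pow_le_pow_left₀ (by positivity) h 2

/-- If a brick `[0,a] × [0,b] × [0,c]` has unit volume and all side lengths at least
`1/√2`, and the vertices of an equilateral triangle lie on three pairwise skew edges
of the brick, then the side length of the triangle is at most `√2`. -/
theorem equilateral_triangle_in_brick_side_le_sqrt_two
    (a b c s t u : ℝ)
    (ha : 0 < a) (hb : 0 < b) (hc : 0 < c)
    (hvol : a * b * c = 1)
    (ha2 : 1 / Real.sqrt 2 ≤ a) (hb2 : 1 / Real.sqrt 2 ≤ b) (hc2 : 1 / Real.sqrt 2 ≤ c)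
    (hs : s ∈ Set.Icc (0 : ℝ) a) (ht : t ∈ Set.Icc (0 : ℝ) b) (hu : u ∈ Set.Icc (0 : ℝ) c)
    (A B C : EuclideanSpace ℝ (Fin 3))
    (hA : A = ![s, 0, 0]) (hB : B = ![a, t, c]) (hC : C = ![0, b, u])
    (hAB : dist A B = dist B C) (hBC : dist B C = dist C A) :
    dist A B ≤ Real.sqrt 2 := by
  by_contra hcon
  rw [not_le] at hcon
  have e : ∀ P Q : EuclideanSpace ℝ (Fin 3), Real.sqrt 2 < dist P Q →
      2 < (P 0 - Q 0)^2 + (P 1 - Q 1)^2 + (P 2 - Q 2)^2 := by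
    intro P Q hPQ
    rw [EuclideanSpace.dist_eq, Real.sqrt_lt_sqrt_iff (by norm_num), Fin.sum_univ_three] at hPQ
    simpa only [Real.dist_eq, sq_abs] using hPQ
  have e1 := e A B hcon
  have e2 := e B C (hAB ▸ hcon)
  have e3 := e C A (hBC ▸ hAB ▸ hcon)
  rw [hA, hB] at e1
  rw [hB, hC] at e2
  rw [hA, hC] at e3
  simp at e1 e2 e3
  exact brick_all a b c s t u ha hb hc hvol (half_le_sq_of a ha2) (half_le_sq_of b hb2)
    (half_le_sq_of c hc2) hs.1 hs.2 ht.1 ht.2 hu.1 hu.2 (by linarith) (by linarith) (by linarith)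
end

section
/- Let a, b, c > 0 with abc = 1 and a ≥ 1/√2, b ≥ 1/√2, c ≥ 1/√2. Let A = (s, 0, 0), B = (a, t, c), C = (0, b, u) be points of ℝ³ with s ∈ [0, a], t ∈ [0, b], u ∈ [0, c] (so A, B, C lie on three pairwise skew edges of the brick [0,a] × [0,b] × [0,c]). Then at least one of the three side lengths of the triangle ABC is at most √2: min(dist(A,B), dist(B,C), dist(C,A)) ≤ √2. -/
set_option maxHeartbeats 1000000

theorem brick_sqle {x y : ℝ} (h : x ^ 2 ≤ y ^ 2) (hy : 0 ≤ y) : x ≤ y := by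
  by_contra hc
  push Not at hc
  nlinarith

theorem brick_alg (P Q R : ℝ) (hP2 : 1 / 2 ≤ P) (hPQ : P ≤ Q) (hQR : Q ≤ R)
    (hPQR : P * (Q * R) = 1) : P ≤ 1 ∧ 0 ≤ 3 - 2 * P - Q * R ∧ 0 ≤ 2 - P - Q := by
  have hP1 : P ≤ 1 := by
    by_contra h
    push Not at h
    have : 1 < Q * R := by nlinarith
    nlinarith
  refine ⟨hP1, ?_, ?_⟩
  · have : 0 ≤ P * (3 - 2 * P - Q * R) := by
      nlinarith [mul_nonneg (sub_nonneg.2 hP2) (sub_nonneg.2 hP1)]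
    exact nonneg_of_mul_nonneg_right this (by linarith)
  · by_contra h
    have h4 : 2 - P < Q := by linarith
    have h5 : (2 - P) ^ 2 < Q ^ 2 := by
      apply pow_lt_pow_left₀ h4 (by linarith) (by norm_num)
    have h6 : P * Q ^ 2 ≤ 1 := by
      have : Q * Q ≤ Q * R := mul_le_mul_of_nonneg_left hQR (by linarith)
      have := mul_le_mul_of_nonneg_left this (by linarith : 0 ≤ P)
      linarith
    have h7 : P * (2 - P) ^ 2 < P * Q ^ 2 := mul_lt_mul_of_pos_left h5 (by linarith)
    have h8 : 0 ≤ (1 - P) * (3 * P - 1 - P ^ 2) := by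
      apply mul_nonneg
      · linarith
      · nlinarith
    nlinarith

theorem brick_core (a b c x y z r : ℝ) (ha : 0 < a) (hab : a ≤ b) (hbc : b ≤ c)
    (hvol : a * b * c = 1) (ha2 : 1 / 2 ≤ a ^ 2) (hr : 0 ≤ r) (hrc : r ^ 2 = 2 - c ^ 2)
    (hx : 0 ≤ x) (hxa : x ≤ a) (hy : 0 ≤ y) (hyb : y ≤ b) (hz : 0 ≤ z) (hzc : z ≤ c)
    (h1 : x ^ 2 + y ^ 2 = r ^ 2) (h2 : 2 < (b - y) ^ 2 + z ^ 2 + a ^ 2)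
    (h3 : 2 < (c - z) ^ 2 + (a - x) ^ 2 + b ^ 2) : False := by
  have hb : 0 < b := by linarith
  have hc : 0 < c := by linarith
  obtain ⟨P, hP⟩ : ∃ P, P = a ^ 2 := ⟨_, rfl⟩
  obtain ⟨Q, hQ⟩ : ∃ Q, Q = b ^ 2 := ⟨_, rfl⟩
  obtain ⟨R, hR⟩ : ∃ R, R = c ^ 2 := ⟨_, rfl⟩
  have hPQ : P ≤ Q := by rw [hP, hQ]; gcongr
  have hQR : Q ≤ R := by rw [hQ, hR]; gcongr
  have hP2 : 1 / 2 ≤ P := by rw [hP]; exact ha2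
  have hPQR : P * (Q * R) = 1 := by
    rw [hP, hQ, hR]
    calc a ^ 2 * (b ^ 2 * c ^ 2) = (a * b * c) ^ 2 := by ring
      _ = 1 := by rw [hvol]; norm_num
  obtain ⟨hP1, K, hD0⟩ := brick_alg P Q R hP2 hPQ hQR hPQR
  obtain ⟨D, hD⟩ : ∃ D, D = 2 - P - Q := ⟨_, rfl⟩
  rw [← hD] at hD0
  have hrR : r ^ 2 = 2 - R := by rw [hrc, hR]
  have hw : 0 ≤ c - z := by linarith
  obtain ⟨w, hwd⟩ : ∃ w, w = c - z := ⟨_, rfl⟩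
  rw [← hwd] at hw h3
  have e1 : D + 2 * b * y - y ^ 2 < z ^ 2 := by rw [hD, hP, hQ]; linarith
  have e2 : D + 2 * a * x - x ^ 2 < w ^ 2 := by rw [hD, hP, hQ]; linarith
  have hby : 0 ≤ b * (b - y) := mul_nonneg hb.le (by linarith)
  have hyy : y ^ 2 ≤ b * y := by linarith [mul_nonneg hy (sub_nonneg.2 hyb)]
  have hxx : x ^ 2 ≤ a * x := by linarith [mul_nonneg hx (sub_nonneg.2 hxa)]
  have hbye : 0 ≤ b * y := by positivity
  have haxe : 0 ≤ a * x := by positivity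
  have hN : z * w < 1 - D - b * y - a * x := by
    have : R = z ^ 2 + w ^ 2 + 2 * (z * w) := by rw [hR, hwd]; ring
    linarith
  have hzw : 0 ≤ z * w := mul_nonneg hz hw
  have hfin : (D + 2 * b * y - y ^ 2) * (D + 2 * a * x - x ^ 2)
      < (1 - D - b * y - a * x) ^ 2 := by
    have g1 : (D + 2 * b * y - y ^ 2) * (D + 2 * a * x - x ^ 2) ≤ z ^ 2 * w ^ 2 :=
      mul_le_mul e1.le e2.le (by linarith) (sq_nonneg _)
    have g2 : (z * w) ^ 2 < (1 - D - b * y - a * x) ^ 2 := by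
      apply pow_lt_pow_left₀ hN hzw (by norm_num)
    linarith
  rcases le_or_gt r a with hra | hra
  · -- case r ≤ a
    have hxr : x ≤ r := by
      refine brick_sqle ?_ hr
      linarith [sq_nonneg y]
    have hyr : y ≤ r := by
      refine brick_sqle ?_ hr
      linarith [sq_nonneg x]
    have hxy : r ≤ x + y := by
      refine brick_sqle ?_ (by linarith)
      linarith [mul_nonneg hx hy]
    obtain ⟨p, hp⟩ : ∃ p, p = 2 * a - r := ⟨_, rfl⟩
    have hp0 : 0 ≤ p := by linarith
    have f1 : D + p * y ≤ D + 2 * b * y - y ^ 2 := by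
      have := mul_nonneg hy (sub_nonneg.2 hyr)
      have := mul_nonneg hy (sub_nonneg.2 hab)
      rw [hp]; linarith
    have f2 : D + p * x ≤ D + 2 * a * x - x ^ 2 := by
      have := mul_nonneg hx (sub_nonneg.2 hxr)
      rw [hp]; linarith
    have f3 : (D + p * y) * (D + p * x) ≤
        (D + 2 * b * y - y ^ 2) * (D + 2 * a * x - x ^ 2) :=
      mul_le_mul f1 f2 (by positivity) (by linarith)
    have f4 : D ^ 2 + p * D * r ≤ (D + p * y) * (D + p * x) := by
      have q1 : 0 ≤ p * D * (x + y - r) := mul_nonneg (by positivity) (by linarith)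
      have q2 : 0 ≤ p ^ 2 * (x * y) := by positivity
      linarith
    have f5 : a * r ≤ b * y + a * x := by
      have := mul_nonneg hy (sub_nonneg.2 hab)
      have := mul_nonneg ha.le (sub_nonneg.2 hxy)
      linarith
    have f6 : (1 - D - b * y - a * x) ^ 2 ≤ (1 - D - a * r) ^ 2 := by
      apply pow_le_pow_left₀ <;> linarith
    have f7 : (1 - D - a * r) ^ 2 ≤ D ^ 2 + p * D * r := by
      have i1 : D ^ 2 + p * D * r - (1 - D - a * r) ^ 2
          = - r ^ 2 * (D + P) + 2 * D + 2 * (a * r) - 1 := by rw [hp, hP]; ring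
      have i2 : - r ^ 2 * (D + P) + 2 * D + 2 * (a * r) - 1
          = 2 * R - 2 * P - 1 - Q * R + 2 * (a * r) := by rw [hrR, hD]; ring
      have i3 : r ^ 2 ≤ a * r := by linarith [mul_nonneg hr (sub_nonneg.2 hra)]
      linarith
    linarith
  · -- case a < r
    obtain ⟨e, he⟩ : ∃ e, e = Real.sqrt (r ^ 2 - a ^ 2) := ⟨_, rfl⟩
    have he0 : 0 ≤ e := by rw [he]; exact Real.sqrt_nonneg _
    have hra2 : a ^ 2 ≤ r ^ 2 := by gcongr
    have hee : e ^ 2 = r ^ 2 - a ^ 2 := by rw [he]; exact Real.sq_sqrt (by linarith)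
    have her : e ≤ r := by
      refine brick_sqle ?_ hr
      linarith [sq_nonneg a]
    obtain ⟨θ, hθ⟩ : ∃ θ, θ = x / a := ⟨_, rfl⟩
    have hxθ : x = a * θ := by rw [hθ]; field_simp
    have hθ0 : 0 ≤ θ := by rw [hθ]; positivity
    have hθ1 : θ ≤ 1 := by rw [hθ, div_le_one ha]; exact hxa
    have hθ1' : 0 ≤ 1 - θ := by linarith
    have hye : e * θ + r * (1 - θ) ≤ y := by
      refine brick_sqle ?_ hy
      have : y ^ 2 = r ^ 2 * (1 - θ ^ 2) + e ^ 2 * θ ^ 2 := by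
        rw [hee]; rw [hxθ] at h1; linarith
      have : 0 ≤ r * (r - e) * (θ * (1 - θ)) :=
        mul_nonneg (mul_nonneg hr (by linarith)) (mul_nonneg hθ0 hθ1')
      linarith
    have hax : a * x = P * θ := by rw [hxθ, hP]; ring
    obtain ⟨m, hm⟩ : ∃ m, m = b * e := ⟨_, rfl⟩
    obtain ⟨n, hn⟩ : ∃ n, n = b * r := ⟨_, rfl⟩
    have hm0 : 0 ≤ m := by rw [hm]; positivity
    have hn0 : 0 ≤ n := by rw [hn]; positivity
    have hm2 : m ^ 2 = Q * (2 - R - P) := by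
      rw [hm, mul_pow, hee, hrR, ← hP, ← hQ]
    have hn2 : n ^ 2 = Q * (2 - R) := by
      rw [hn, mul_pow, hrR, ← hQ]
    have hbyL : m * θ + n * (1 - θ) ≤ b * y := by
      have := mul_le_mul_of_nonneg_left hye hb.le
      rw [hm, hn]; linarith
    have hR32 : R ≤ 3 / 2 := by linarith
    have E0 : 1 ≤ 2 * D + n := by
      have hn1 : n ^ 2 ≤ 1 := by
        have : Q * (2 - R) ≤ R * (2 - R) := by apply mul_le_mul_of_nonneg_right hQR; linarith [sq_nonneg r]
        linarith [sq_nonneg (R - 1)]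
      have hn3 : n ≤ 1 := brick_sqle (by linarith) (by norm_num)
      have : n ^ 2 ≤ n := by linarith [mul_nonneg hn0 (sub_nonneg.2 hn3)]
      linarith
    obtain ⟨L, hL⟩ : ∃ L, L = max 0 (1 - D - P - m) := ⟨_, rfl⟩
    have hL0 : 0 ≤ L := by rw [hL]; exact le_max_left _ _
    have hL1 : 1 - D - P - m ≤ L := by rw [hL]; exact le_max_right _ _
    have hLL : L ^ 2 ≤ (D + m) * (D + P) := by
      rcases le_or_gt (1 - D - P - m) 0 with h | h
      · rw [hL, max_eq_left h]
        have : 0 ≤ (D + m) * (D + P) := mul_nonneg (by linarith) (by linarith)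
        linarith
      · rw [hL, max_eq_right h.le]
        have j1 : m < Q - 1 := by linarith
        have j2 : m ≤ 1 / 2 := by linarith
        have j3 : 2 * m ^ 2 ≤ m := by linarith [mul_nonneg hm0 (sub_nonneg.2 j2)]
        have j4 : 2 * m ^ 2 * Q ≤ m * Q := by
          apply mul_le_mul_of_nonneg_right j3; linarith
        have j5 : 0 ≤ (2 * Q - 2) * m ^ 2 := mul_nonneg (by linarith) (sq_nonneg _)
        have j6 : (D + m) * (D + P) - (1 - D - P - m) ^ 2
          = (3 - 2 * P - 2 * Q + P * Q) + m * Q - m ^ 2 := by rw [hD]; ring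
        linarith
    have hLuv : 2 * L ≤ (D + m) + (D + P) := by
      refine brick_sqle ?_ (by linarith)
      linarith [sq_nonneg ((D + m) - (D + P))]
    have k1 : 1 - D - b * y - a * x ≤ θ * L + (1 - θ) * D := by
      rw [hax]
      have := mul_le_mul_of_nonneg_left hL1 hθ0
      have := mul_le_mul_of_nonneg_left E0 hθ1'
      linarith
    have k2 : (1 - D - b * y - a * x) ^ 2 ≤ (θ * L + (1 - θ) * D) ^ 2 := by
      apply pow_le_pow_left₀ _ k1; linarith
    have k3 : (θ * L + (1 - θ) * D) ^ 2 ≤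
        (θ * (D + m) + (1 - θ) * (D + n)) * (θ * (D + P) + (1 - θ) * D) := by
      have l1 := mul_le_mul_of_nonneg_left hLL (sq_nonneg θ)
      have l2 : 0 ≤ (1 - θ) ^ 2 * (n * D) := by positivity
      have l3 : 2 * L * D ≤ (D + m) * D + (D + n) * (D + P) := by
        have := mul_le_mul_of_nonneg_right hLuv hD0
        have : 0 ≤ n * (D + P) := mul_nonneg hn0 (by linarith)
        linarith
      have l4 := mul_le_mul_of_nonneg_left l3 (mul_nonneg hθ0 hθ1')
      linarith
    have k4 : (θ * (D + m) + (1 - θ) * (D + n)) * (θ * (D + P) + (1 - θ) * D) ≤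
        (D + 2 * b * y - y ^ 2) * (D + 2 * a * x - x ^ 2) := by
      apply mul_le_mul
      · linarith
      · linarith
      · have : 0 ≤ D + P := by linarith
        positivity
      · linarith
    linarith

theorem brick_key (a b c x y z : ℝ) (ha : 0 < a) (hab : a ≤ b) (hbc : b ≤ c)
    (hvol : a * b * c = 1) (ha2 : 1 / 2 ≤ a ^ 2)
    (hx : 0 ≤ x) (hxa : x ≤ a) (hy : 0 ≤ y) (hyb : y ≤ b) (hz : 0 ≤ z) (hzc : z ≤ c)
    (h1 : 2 < x ^ 2 + y ^ 2 + c ^ 2) (h2 : 2 < (b - y) ^ 2 + z ^ 2 + a ^ 2)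
    (h3 : 2 < (c - z) ^ 2 + (a - x) ^ 2 + b ^ 2) : False := by
  rcases le_or_gt (c ^ 2) 2 with hc2 | hc2
  · have hs : 0 < x ^ 2 + y ^ 2 := by linarith
    obtain ⟨q, hq⟩ : ∃ q, q = Real.sqrt (x ^ 2 + y ^ 2) := ⟨_, rfl⟩
    have hq0 : 0 < q := by rw [hq]; exact Real.sqrt_pos.2 hs
    have hqq : q ^ 2 = x ^ 2 + y ^ 2 := by rw [hq]; exact Real.sq_sqrt hs.le
    obtain ⟨r, hr⟩ : ∃ r, r = Real.sqrt (2 - c ^ 2) := ⟨_, rfl⟩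
    have hr0 : 0 ≤ r := by rw [hr]; exact Real.sqrt_nonneg _
    have hrr : r ^ 2 = 2 - c ^ 2 := by rw [hr]; exact Real.sq_sqrt (by linarith)
    have hrq : r ≤ q := by
      refine brick_sqle ?_ hq0.le
      linarith
    obtain ⟨k, hk⟩ : ∃ k, k = r / q := ⟨_, rfl⟩
    have hk0 : 0 ≤ k := by rw [hk]; positivity
    have hk1 : k ≤ 1 := by rw [hk, div_le_one hq0]; exact hrq
    have hkx : k * x ≤ x := by linarith [mul_nonneg hx (sub_nonneg.2 hk1)]
    have hky : k * y ≤ y := by linarith [mul_nonneg hy (sub_nonneg.2 hk1)]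
    refine brick_core a b c (k * x) (k * y) z r ha hab hbc hvol ha2 hr0 hrr (by positivity)
      (by linarith) (by positivity) (by linarith) hz hzc ?_ ?_ ?_
    · have : k * q = r := by rw [hk]; field_simp
      rw [← this]
      linear_combination (-k ^ 2) * hqq
    · have : (b - y) ^ 2 ≤ (b - k * y) ^ 2 := by
        apply pow_le_pow_left₀ <;> linarith
      linarith
    · have : (a - x) ^ 2 ≤ (a - k * x) ^ 2 := by
        apply pow_le_pow_left₀ <;> linarith
      linarith
  · have hb : 0 < b := by linarith
    have hc : 0 < c := by linarith
    have hb2 : 1 / 2 ≤ b ^ 2 := by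
      have : a ^ 2 ≤ b ^ 2 := by gcongr
      linarith
    obtain ⟨P, hP⟩ : ∃ P, P = a ^ 2 := ⟨_, rfl⟩
    obtain ⟨Q, hQ⟩ : ∃ Q, Q = b ^ 2 := ⟨_, rfl⟩
    obtain ⟨R, hR⟩ : ∃ R, R = c ^ 2 := ⟨_, rfl⟩
    have hPQR : P * Q * R = 1 := by
      rw [hP, hQ, hR]
      calc a ^ 2 * b ^ 2 * c ^ 2 = (a * b * c) ^ 2 := by ring
        _ = 1 := by rw [hvol]; norm_num
    have i1 : (b - y) ^ 2 ≤ b ^ 2 := by apply pow_le_pow_left₀ <;> linarith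
    have i2 : (a - x) ^ 2 ≤ a ^ 2 := by apply pow_le_pow_left₀ <;> linarith
    rw [← hP] at ha2 h2 i2
    rw [← hQ] at hb2 h3 i1
    rw [← hR] at hc2
    have m1 : P + Q ≤ 2 * (P * Q) + 1 / 2 := by
      linarith [mul_nonneg (sub_nonneg.2 ha2) (sub_nonneg.2 hb2)]
    have m2 : 1 / 4 ≤ P * Q := by linarith [mul_nonneg (sub_nonneg.2 ha2) (sub_nonneg.2 hb2)]
    have hR4 : R ≤ 4 := by linarith [mul_nonneg (sub_nonneg.2 m2) (by linarith : 0 ≤ R)]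
    have hPQ : P * Q ≤ 1 / 2 := by
      linarith [mul_nonneg (by linarith : 0 ≤ P * Q) (sub_nonneg.2 hc2.le)]
    have m3 : 8 - 4 * P - 4 * Q < R := by
      obtain ⟨D, hD⟩ : ∃ D, D = 2 - P - Q := ⟨_, rfl⟩
      have hD0 : 0 ≤ D := by linarith
      have n1 : D < z ^ 2 := by linarith
      have n2 : D < (c - z) ^ 2 := by linarith
      have n3 : D ≤ z * (c - z) := by
        have hzc' : 0 ≤ c - z := by linarith
        refine brick_sqle ?_ (mul_nonneg hz hzc')
        have := mul_le_mul n1.le n2.le hD0 (sq_nonneg z)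
        linarith
      have : R = z ^ 2 + (c - z) ^ 2 + 2 * (z * (c - z)) := by rw [hR]; ring
      linarith
    have m4 : 6 - 8 * (P * Q) < R := by linarith
    have m5 : 6 * R - 8 < R ^ 2 := by
      linarith [mul_pos (sub_pos.2 m4) (by linarith : 0 < R)]
    linarith [mul_nonneg (sub_nonneg.2 hc2.le) (sub_nonneg.2 hR4)]

theorem brick_all_s1 (a b c x y z : ℝ) (ha : 0 < a) (hb : 0 < b) (hc : 0 < c)
    (hvol : a * b * c = 1) (ha2 : 1 / 2 ≤ a ^ 2) (hb2 : 1 / 2 ≤ b ^ 2) (hc2 : 1 / 2 ≤ c ^ 2)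
    (hx : 0 ≤ x) (hxa : x ≤ a) (hy : 0 ≤ y) (hyb : y ≤ b) (hz : 0 ≤ z) (hzc : z ≤ c)
    (h1 : 2 < x ^ 2 + y ^ 2 + c ^ 2) (h2 : 2 < (b - y) ^ 2 + z ^ 2 + a ^ 2)
    (h3 : 2 < (c - z) ^ 2 + (a - x) ^ 2 + b ^ 2) : False := by
  rcases le_total a b with hab | hab <;> rcases le_total b c with hbc | hbc <;>
    rcases le_total a c with hac | hac
  · exact brick_key a b c x y z ha hab hbc hvol ha2 hx hxa hy hyb hz hzc h1 h2 h3
  · exact brick_key a b c x y z ha hab hbc hvol ha2 hx hxa hy hyb hz hzc h1 h2 h3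
  · apply brick_key a c b (a - x) (c - z) (b - y) <;> linarith
  · apply brick_key c a b (c - z) (a - x) y <;> linarith
  · apply brick_key b a c y x (c - z) <;> linarith
  · apply brick_key b c a (b - y) z (a - x) <;> linarith
  · apply brick_key c b a z (b - y) x <;> linarith
  · apply brick_key c b a z (b - y) x <;> linarith

/-- If a brick `[0,a] × [0,b] × [0,c]` has unit volume and all side lengths at least
`1/√2`, and the vertices of a triangle lie on three pairwise skew edges of the brick,
then at least one side of the triangle has length at most `√2`. -/
theorem triangle_in_brick_min_side_le_sqrt_two
    (a b c s t u : ℝ)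
    (ha : 0 < a) (hb : 0 < b) (hc : 0 < c)
    (hvol : a * b * c = 1)
    (ha2 : 1 / Real.sqrt 2 ≤ a) (hb2 : 1 / Real.sqrt 2 ≤ b) (hc2 : 1 / Real.sqrt 2 ≤ c)
    (hs : s ∈ Set.Icc (0 : ℝ) a) (ht : t ∈ Set.Icc (0 : ℝ) b) (hu : u ∈ Set.Icc (0 : ℝ) c)
    (A B C : EuclideanSpace ℝ (Fin 3))
    (hA : A = ![s, 0, 0]) (hB : B = ![a, t, c]) (hC : C = ![0, b, u]) :
    min (dist A B) (min (dist B C) (dist C A)) ≤ Real.sqrt 2 := by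
  have key : ∀ v : ℝ, 1 / Real.sqrt 2 ≤ v → 1 / 2 ≤ v ^ 2 := by
    intro v hv
    have h := pow_le_pow_left₀ (by positivity) hv 2
    rwa [div_pow, Real.sq_sqrt (by norm_num), one_pow] at h
  obtain ⟨hs0, hs1⟩ := hs
  obtain ⟨ht0, ht1⟩ := ht
  obtain ⟨hu0, hu1⟩ := hu
  by_contra hcon
  rw [not_le, lt_min_iff, lt_min_iff] at hcon
  obtain ⟨h1, h2, h3⟩ := hcon
  rw [EuclideanSpace.dist_eq, Real.sqrt_lt_sqrt_iff (by norm_num)] at h1 h2 h3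
  simp only [Fin.sum_univ_three, Real.dist_eq, sq_abs, hA, hB, hC] at h1 h2 h3
  simp at h1 h2 h3
  apply brick_all_s1 a b c (a - s) t (c - u) ha hb hc hvol (key a ha2) (key b hb2) (key c hc2) <;>
    linarith
end

section
/- Let β, θ be real numbers with 0 < β ≤ π/2 and 0 ≤ θ ≤ π/2 − β. Then cos θ · sin(β + θ) ≥ sin β, and equality holds if and only if θ = 0 or θ = π/2 − β. -/
open Real

/-- For `0 < β ≤ π/2` and `0 ≤ θ ≤ π/2 - β` we have `cos θ · sin (β + θ) ≥ sin β`,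
with equality if and only if `θ = 0` or `θ = π/2 - β`. -/
theorem cos_mul_sin_ge_sin (β θ : ℝ)
    (hβ0 : 0 < β) (hβ : β ≤ π / 2)
    (hθ0 : 0 ≤ θ) (hθ : θ ≤ π / 2 - β) :
    Real.sin β ≤ Real.cos θ * Real.sin (β + θ) ∧
      (Real.cos θ * Real.sin (β + θ) = Real.sin β ↔ θ = 0 ∨ θ = π / 2 - β) := by
  have key : Real.sin β = Real.cos θ * Real.sin (β + θ) - Real.sin θ * Real.cos (β + θ) := by
    have h := Real.sin_sub (β + θ) θ
    rw [add_sub_cancel_right] at h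
    rw [h]; ring
  have h1 : 0 ≤ Real.sin θ := Real.sin_nonneg_of_nonneg_of_le_pi hθ0 (by linarith [Real.pi_pos])
  have h2 : 0 ≤ Real.cos (β + θ) :=
    Real.cos_nonneg_of_neg_pi_div_two_le_of_le (by linarith [Real.pi_pos]) (by linarith)
  refine ⟨by linarith [mul_nonneg h1 h2], ?_, ?_⟩
  · intro h
    by_contra hne
    rw [not_or] at hne
    have hp : 0 < θ := lt_of_le_of_ne hθ0 (Ne.symm hne.1)
    have hq : θ < π / 2 - β := lt_of_le_of_ne hθ hne.2
    have h3 : 0 < Real.sin θ := Real.sin_pos_of_pos_of_lt_pi hp (by linarith [Real.pi_pos])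
    have h4 : 0 < Real.cos (β + θ) :=
      Real.cos_pos_of_mem_Ioo ⟨by linarith [Real.pi_pos], by linarith⟩
    linarith [mul_pos h3 h4]
  · rintro (h | h)
    · simp [h]
    · have h5 : β + θ = π / 2 := by linarith
      rw [h5, Real.cos_pi_div_two] at key
      rw [h5]; linarith
end

section
/- Define f : (0,∞) → ℝ by f(t) = (2/3)·(t + √(t² + 3/t)). Then f attains a unique minimum on the half-line [1/2, ∞), and the minimizing point lies in the open interval (1/2, 1). -/
/-- The function `f(t) = (2/3)(t + √(t² + 3/t))` attains a unique minimum on the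
half-line `[1/2, ∞)`, and the minimizing point lies in the open interval `(1/2, 1)`. -/
theorem f_unique_min_on_Ici (f : ℝ → ℝ)
    (hf : ∀ t : ℝ, 0 < t → f t = (2 / 3) * (t + Real.sqrt (t ^ 2 + 3 / t))) :
    ∃ t₀ ∈ Set.Ioo (1 / 2 : ℝ) 1,
      (∀ s ∈ Set.Ici (1 / 2 : ℝ), f t₀ ≤ f s) ∧
      (∀ s ∈ Set.Ici (1 / 2 : ℝ), (∀ r ∈ Set.Ici (1 / 2 : ℝ), f s ≤ f r) → s = t₀) := by
  obtain ⟨a, ha0, ha⟩ : ∃ a : ℝ, 0 < a ∧ a ^ 3 = 3 / 8 := by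
    refine ⟨(3 / 8 : ℝ) ^ (1 / 3 : ℝ), by positivity, ?_⟩
    rw [← Real.rpow_natCast, ← Real.rpow_mul (by norm_num)]
    norm_num
  have hfa : f a = 8 / 3 * a := by
    have h : a ^ 2 + 3 / a = (3 * a) ^ 2 := by
      field_simp
      nlinarith
    rw [hf a ha0, h, Real.sqrt_sq (by positivity)]
    ring
  have key : ∀ s : ℝ, 0 < s → s ≠ a → f a < f s := by
    intro s hs hne
    have h : 4 * a - s < Real.sqrt (s ^ 2 + 3 / s) := by
      apply Real.lt_sqrt_of_sq_lt
      have e : s ^ 2 + 3 / s - (4 * a - s) ^ 2 = 8 * a * (s - a) ^ 2 / s := by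
        field_simp
        linear_combination (-8) * ha
      have p : 0 < 8 * a * (s - a) ^ 2 / s := by
        have : 0 < (s - a) ^ 2 := by
          have := sub_ne_zero.mpr hne
          positivity
        positivity
      linarith
    rw [hfa, hf s hs]
    linarith
  have h1 : 1 / 2 < a := by
    by_contra! h
    have := pow_le_pow_left₀ ha0.le h 3
    norm_num at this
    linarith
  have h2 : a < 1 := by
    by_contra! h
    have := pow_le_pow_left₀ zero_le_one h 3
    norm_num at this
    linarith
  refine ⟨a, ⟨h1, h2⟩, ?_, ?_⟩
  · intro s hs
    have hs' : (1 / 2 : ℝ) ≤ s := hs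
    by_cases e : s = a
    · rw [e]
    · exact (key s (by linarith) e).le
  · intro s hs hm
    have hs' : (1 / 2 : ℝ) ≤ s := hs
    by_contra e
    exact absurd (hm a h1.le) (not_le.mpr (key s (by linarith) e))
end

section
/- Let a, b, c, d > 0 satisfy abc = 1, a² ≥ 1/2, b² ≥ 1/2, c² ≥ 1/2, d² = a² + b² + c²/4 and d = c. Then d² ≤ 2, i.e. the equilateral triangle in this configuration has side length at most √2. -/
/-- If `abc = 1`, `a², b², c² ≥ 1/2`, `d² = a² + b² + c²/4` and `d = c`,
then `d² ≤ 2`. -/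
theorem first_case_bound (a b c d : ℝ)
    (ha : 0 < a) (hb : 0 < b) (hc : 0 < c) (hd : 0 < d)
    (hvol : a * b * c = 1)
    (ha2 : 1 / 2 ≤ a ^ 2) (hb2 : 1 / 2 ≤ b ^ 2) (hc2 : 1 / 2 ≤ c ^ 2)
    (hd2 : d ^ 2 = a ^ 2 + b ^ 2 + c ^ 2 / 4)
    (hdc : d = c) :
    d ^ 2 ≤ 2 := by
  subst hdc
  have h1 : a ^ 2 * b ^ 2 * d ^ 2 = 1 := by
    have : a ^ 2 * b ^ 2 * d ^ 2 = (a * b * d) ^ 2 := by ring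
    rw [this, hvol]; norm_num
  have h2 : 0 ≤ (a ^ 2 - 1 / 2) * (b ^ 2 - 1 / 2) :=
    mul_nonneg (by linarith) (by linarith)
  generalize a ^ 2 = x at *
  generalize b ^ 2 = y at *
  generalize d ^ 2 = z at *
  have h3 : 3 * z / 8 - 1 / 4 ≤ x * y := by linarith
  have h4 : (3 * z / 8 - 1 / 4) * z ≤ x * y * z :=
    mul_le_mul_of_nonneg_right h3 (by linarith)
  by_contra h
  push Not at h
  nlinarith
end
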